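/- Let q be an odd prime power and let T be the alternating trilinear form on V = GF(q)^7 with trivector t = f_{124} + f_{235} + f_{346} + f_{457} + f_{561} + f_{672} + f_{713}. Then every vector lying on a T-singular line lies on the quadric Σᵢ₌₁⁷ xᵢ² = 0: if span{a,b} is T-singular, then Σᵢ aᵢ² = 0. -/

import Mathlib

/-!
The form `T` is the triple product `(a × b) ⬝ x` of the seven-dimensional (octonionic) cross
product. If it vanishes for all `x`, then `a × b = 0`, and the double cross product identity
`a × (a × b) = (a ⬝ b) a - (a ⬝ a) b` becomes a linear relation between `a` and `b`.
-/

open Matrix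

theorem alternatingMap_ext_of_strictMono {R M N ι : Type*} [CommSemiring R] [AddCommMonoid M]
    [Module R M] [AddCommGroup N] [Module R N] [LinearOrder ι] {n : ℕ} {f g : M [⋀^Fin n]→ₗ[R] N}
    (e : Module.Basis ι R M) (h : ∀ v : Fin n → ι, StrictMono v → f (e ∘ v) = g (e ∘ v)) :
    f = g := by
  refine e.ext_alternating fun v hv ↦ ?_
  have hsorted : StrictMono (v ∘ Tuple.sort v) :=
    (Tuple.monotone_sort v).strictMono_of_injective (hv.comp (Tuple.sort v).injective)
  have hfg := h _ hsorted
  rw [← Function.comp_assoc, f.map_perm, g.map_perm] at hfg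
  exact smul_left_cancel _ hfg

/-- The lines `{p, p + 1, p + 3}` of the Fano plane on `ZMod 7`, as increasing triples. -/
def fanoTriples : List (ℕ × ℕ × ℕ) :=
  [(0, 1, 3), (1, 2, 4), (2, 3, 5), (3, 4, 6), (0, 4, 5), (1, 5, 6), (0, 2, 6)]

section FanoForm

variable {R : Type*} [CommRing R]

variable (R) in
/-- The alternating trilinear form on `R⁷` with trivector `∑ p, f_p ∧ f_{p+1} ∧ f_{p+3}`, the
indices being taken modulo `7`. Each summand is the `3 × 3` minor on the columns of a line of the
Fano plane. -/
def fanoForm : (Fin 7 → R) [⋀^Fin 3]→ₗ[R] R :=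
  ∑ p : Fin 7, detRowAlternating.compLinearMap (LinearMap.funLeft R R ![p, p + 1, p + 3])

/-- The seven-dimensional cross product, i.e. the product of imaginary octonions followed by
projection to the imaginary part, in the basis where `e_p × e_{p+1} = e_{p+3}` modulo `7`. The
summands of the `i`-th coordinate correspond to the three lines of the Fano plane through `i`. -/
def sevenCross (a b : Fin 7 → R) : Fin 7 → R := fun i ↦
  (a (i + 1) * b (i + 3) - a (i + 3) * b (i + 1)) +
  (a (i + 2) * b (i + 6) - a (i + 6) * b (i + 2)) +
  (a (i + 4) * b (i + 5) - a (i + 5) * b (i + 4))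

theorem sevenCross_zero_right (a : Fin 7 → R) : sevenCross a 0 = 0 := by
  ext
  simp [sevenCross]

theorem sevenCross_sevenCross_self (a b : Fin 7 → R) :
    sevenCross a (sevenCross a b) = (a ⬝ᵥ b) • a - (a ⬝ᵥ a) • b := by
  ext i
  simp only [sevenCross, dotProduct, Fin.sum_univ_seven, Pi.sub_apply, Pi.smul_apply, smul_eq_mul]
  fin_cases i <;> simp only [Fin.reduceFinMk, Fin.reduceAdd, Fin.zero_eta, Fin.mk_one] <;> ring

theorem dotProduct_self_eq_zero_of_sevenCross_eq_zero {a b : Fin 7 → R}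
    (hab : LinearIndependent R ![a, b]) (h : sevenCross a b = 0) : a ⬝ᵥ a = 0 := by
  have hrel : (a ⬝ᵥ b) • a + (-(a ⬝ᵥ a)) • b = 0 := by
    rw [neg_smul, ← sub_eq_add_neg, ← sevenCross_sevenCross_self, h, sevenCross_zero_right]
  exact neg_eq_zero.mp (LinearIndependent.pair_iff.mp hab _ _ hrel).2

theorem sevenCross_single_single {i j k : Fin 7} (hij : i < j) (hjk : j < k) :
    sevenCross (Pi.single i 1) (Pi.single j 1) k =
      if ((i : ℕ), (j : ℕ), (k : ℕ)) ∈ fanoTriples then (1 : R) else 0 := by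
  fin_cases i <;> fin_cases j <;> fin_cases k <;> simp [sevenCross, fanoTriples] at hij hjk ⊢

theorem fanoForm_apply (v : Fin 3 → Fin 7 → R) :
    fanoForm R v = ∑ p, det ((of v).submatrix id ![p, p + 1, p + 3]) := by
  simp only [fanoForm, Fin.sum_univ_seven, AlternatingMap.add_apply]
  rfl

theorem fanoForm_eq_sevenCross_dotProduct (a b x : Fin 7 → R) :
    fanoForm R ![a, b, x] = sevenCross a b ⬝ᵥ x := by
  have hminor (p : Fin 7) : det ((of ![a, b, x]).submatrix id ![p, p + 1, p + 3]) =
      a p * b (p + 1) * x (p + 3) - a p * b (p + 3) * x (p + 1) - a (p + 1) * b p * x (p + 3) +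
      a (p + 1) * b (p + 3) * x p + a (p + 3) * b p * x (p + 1) - a (p + 3) * b (p + 1) * x p :=
    det_fin_three _
  simp only [fanoForm_apply, hminor, sevenCross, dotProduct, Fin.sum_univ_seven, Fin.reduceAdd]
  ring

theorem eq_fanoForm_of_single (T : (Fin 7 → R) [⋀^Fin 3]→ₗ[R] R)
    (hT : ∀ i j k : Fin 7, i < j → j < k →
      T ![Pi.single i 1, Pi.single j 1, Pi.single k 1] =
        if ((i : ℕ), (j : ℕ), (k : ℕ)) ∈ fanoTriples then 1 else 0) :
    T = fanoForm R := by
  refine alternatingMap_ext_of_strictMono (Pi.basisFun R (Fin 7)) fun v hv ↦ ?_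
  have hbasis : Pi.basisFun R (Fin 7) ∘ v =
      ![Pi.single (v 0) 1, Pi.single (v 1) 1, Pi.single (v 2) 1] := by
    ext i : 1
    fin_cases i <;> simp
  have h01 : v 0 < v 1 := hv (by decide)
  have h12 : v 1 < v 2 := hv (by decide)
  rw [hbasis, hT _ _ _ h01 h12, fanoForm_eq_sevenCross_dotProduct, dotProduct_single_one,
    sevenCross_single_single h01 h12]

end FanoForm

theorem stmt_18_general (R : Type*) [CommRing R] (T : (Fin 7 → R) [⋀^Fin 3]→ₗ[R] R)
    (hT : ∀ i j k : Fin 7, i < j → j < k →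
      T ![Pi.single i 1, Pi.single j 1, Pi.single k 1] =
        if ((i : ℕ), (j : ℕ), (k : ℕ)) ∈ fanoTriples then 1 else 0) :
    ∀ a b : Fin 7 → R, LinearIndependent R ![a, b] →
      (∀ x, T ![a, b, x] = 0) → ∑ i, (a i) ^ 2 = 0 := by
  intro a b hab hsingular
  obtain rfl := eq_fanoForm_of_single T hT
  have hcross : sevenCross a b = 0 := dotProduct_eq_zero _ fun x ↦ by
    rw [← fanoForm_eq_sevenCross_dotProduct, hsingular]
  simpa only [dotProduct, sq] using dotProduct_self_eq_zero_of_sevenCross_eq_zero hab hcross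

/-- Over `GF(q)` with `q` odd, for the form on `F⁷` with trivector
`t = f₁₂₄ + f₂₃₅ + f₃₄₆ + f₄₅₇ + f₅₆₁ + f₆₇₂ + f₇₁₃`, every vector on a
`T`-singular line lies on the quadric `Σ xᵢ² = 0`. (0-based indices.) -/
theorem stmt_18 (F : Type*) [Field F] [Fintype F] (hq : Odd (Fintype.card F))
    (T : AlternatingMap F (Fin 7 → F) F (Fin 3))
    (hT : ∀ i j k : Fin 7, i < j → j < k →
      T ![Pi.single i 1, Pi.single j 1, Pi.single k 1] =
        if ((i : ℕ), (j : ℕ), (k : ℕ)) ∈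
            [((0:ℕ), (1:ℕ), (3:ℕ)), (1, 2, 4), (2, 3, 5), (3, 4, 6),
              (0, 4, 5), (1, 5, 6), (0, 2, 6)] then 1 else 0) :
    ∀ a b : Fin 7 → F, LinearIndependent F ![a, b] →
      (∀ x, T ![a, b, x] = 0) → ∑ i, (a i) ^ 2 = 0 :=
  stmt_18_general F T hT
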